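/- Minimality of inferred patterns: let x⃗ = (x₁,…,xₙ) be pairwise distinct variables and M learning data with n columns, and suppose ((x₁,…,xₙ), [M/x⃗]) ⟶* (t₁, Θ₁) where (t₁, Θ₁) admits no further ⟶ step. If t₀ is a solvable tuple pattern with M ⊨ t₀, then L(t₁) ⊇ L(t₀) implies L(t₁) = L(t₀). -/

import Mathlib

namespace STPaper

variable {A V : Type}

/-- A word over the alphabet `A`. -/
abbrev Word (A : Type) := List A

/-- A pattern: a finite word over `A ⊕ V` (letters and variables). -/
abbrev Pat (A V : Type) := List (A ⊕ V)

/-- A tuple pattern: a finite tuple of patterns. -/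
abbrev TP (A V : Type) := List (Pat A V)

/-- A column of learning data: one word per row. -/
abbrev Col (A : Type) := List (Word A)

/-- Learning data, represented as its list of columns. -/
abbrev Data (A : Type) := List (Col A)

/-- A data-substitution `[M/x⃗]`: the number `m` of rows together with the list pairing each
variable of `x⃗` with the corresponding column of `M`. -/
structure DSub (A V : Type) where
  m : ℕ
  entries : List (V × Col A)

/-- Apply a word-valued substitution to a pattern. -/
def substPatW (θ : V → Word A) (p : Pat A V) : Word A :=
  (p.map (Sum.elim (fun a => [a]) θ)).flatten

/-- Look up the column assigned to a variable by a data-substitution (default: all-ε). -/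
def lookupCol [DecidableEq V] (E : List (V × Col A)) (x : V) : Col A :=
  match E.find? (fun e => decide (e.1 = x)) with
  | some e => e.2
  | none => []

/-- The substitution corresponding to the `i`-th row of a data-substitution. -/
def DSub.rowSub [DecidableEq V] (Θ : DSub A V) (i : ℕ) : V → Word A :=
  fun x => (lookupCol Θ.entries x).getD i []

/-- `Θ.apply t` : the matrix `Θt` (as a list of columns, each of length `Θ.m`). -/
def DSub.apply [DecidableEq V] (Θ : DSub A V) (t : TP A V) : Data A :=
  t.map (fun p => (List.range Θ.m).map (fun i => substPatW (Θ.rowSub i) p))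

/-- Well-formedness of a data-substitution: pairwise-distinct variables and
all columns of length `m`. -/
def DSub.WF (Θ : DSub A V) : Prop :=
  (Θ.entries.map Prod.fst).Nodup ∧ ∀ e ∈ Θ.entries, e.2.length = Θ.m

/-- The free variables of a tuple pattern. -/
def fvTP (t : TP A V) : Set V := {x | Sum.inr x ∈ t.flatten}

/-- Substitution of a single pattern `q` for the variable `x` in a pattern. -/
def substVar [DecidableEq A] [DecidableEq V] (x : V) (q : Pat A V) (p : Pat A V) : Pat A V :=
  (p.map (fun s => if s = Sum.inr x then q else [s])).flatten

/-- Substitution of a single pattern `q` for the variable `x` in a tuple pattern. -/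
def substVarTP [DecidableEq A] [DecidableEq V] (x : V) (q : Pat A V) (t : TP A V) : TP A V :=
  t.map (substVar x q)

/-- Simultaneous substitution `[qs/xs]p` of the patterns `qs` for the variables `xs`. -/
def substVars [DecidableEq V] (xs : List V) (qs : List (Pat A V)) (p : Pat A V) : Pat A V :=
  (p.map (fun s =>
    match s with
    | Sum.inl a => [Sum.inl a]
    | Sum.inr x =>
      match (xs.zip qs).find? (fun e => decide (e.1 = x)) with
      | some e => e.2
      | none => [Sum.inr x])).flatten

/-- Simultaneous substitution `[qs/xs]t` on a tuple pattern. -/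
def substVarsTP [DecidableEq V] (xs : List V) (qs : List (Pat A V)) (t : TP A V) : TP A V :=
  t.map (substVars xs qs)

/-- A column is the all-ε column. -/
def allEps (c : Col A) : Prop := ∀ w ∈ c, w = []

/-- The trivial tuple pattern `(x₁, …, xₙ)`. -/
def trivTP (xs : List V) : TP A V := xs.map (fun x => [Sum.inr x])

section
variable [DecidableEq A] [DecidableEq V]

/-- The rewriting relation ⟶ on pairs of a tuple pattern and a data-substitution. -/
inductive Step : (TP A V × DSub A V) → (TP A V × DSub A V) → Prop
  | pre (t : TP A V) (m : ℕ) (E : List (V × Col A)) (i j : ℕ)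
      (hi : i < E.length) (hj : j < E.length) (hij : i ≠ j)
      (s : Col A) (hslen : s.length = (E[i]'hi).2.length)
      (hpre : (E[j]'hj).2 = List.zipWith (· ++ ·) (E[i]'hi).2 s)
      (hne : ¬ allEps (E[i]'hi).2)
      (x' : V) (hx1 : x' ∉ E.map Prod.fst) (hx2 : Sum.inr x' ∉ t.flatten) :
      Step (t, ⟨m, E⟩)
        (substVarTP (E[j]'hj).1 [Sum.inr (E[i]'hi).1, Sum.inr x'] t,
         ⟨m, E.set j (x', s)⟩)
  | cpre (t : TP A V) (m : ℕ) (E : List (V × Col A)) (j : ℕ)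
      (hj : j < E.length) (a : A) (s : Col A)
      (hpre : (E[j]'hj).2 = s.map (fun w => a :: w))
      (x' : V) (hx1 : x' ∉ E.map Prod.fst) (hx2 : Sum.inr x' ∉ t.flatten) :
      Step (t, ⟨m, E⟩)
        (substVarTP (E[j]'hj).1 [Sum.inl a, Sum.inr x'] t, ⟨m, E.set j (x', s)⟩)
  | eps (t : TP A V) (m : ℕ) (E : List (V × Col A)) (j : ℕ)
      (hj : j < E.length) (heps : allEps (E[j]'hj).2) :
      Step (t, ⟨m, E⟩) (substVarTP (E[j]'hj).1 [] t, ⟨m, E.eraseIdx j⟩)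

/-- `n`-step rewriting. -/
def StepN : ℕ → (TP A V × DSub A V) → (TP A V × DSub A V) → Prop
  | 0 => fun c₁ c₂ => c₁ = c₂
  | n + 1 => fun c₁ c₃ => ∃ c₂, Step c₁ c₂ ∧ StepN n c₂ c₃

end

/-- The reduction relation ⇒ on tuple patterns. -/
inductive PStep : TP A V → TP A V → Prop
  | pre (t : TP A V) (i j : ℕ) (hi : i < t.length) (hj : j < t.length)
      (hij : i ≠ j) (p' : Pat A V)
      (hdec : t[j]'hj = (t[i]'hi) ++ p') (hne : t[i]'hi ≠ []) :
      PStep t (t.set j p')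
  | cpre (t : TP A V) (j : ℕ) (hj : j < t.length) (a : A) (p' : Pat A V)
      (hdec : t[j]'hj = Sum.inl a :: p') :
      PStep t (t.set j p')
  | eps (t : TP A V) (j : ℕ) (hj : j < t.length) (heps : t[j]'hj = []) :
      PStep t (t.eraseIdx j)

/-- A tuple pattern is solvable if it reduces to a trivial tuple of pairwise
distinct variables. -/
def Solvable (t : TP A V) : Prop :=
  ∃ ys : List V, ys.Nodup ∧ Relation.ReflTransGen PStep t (trivTP ys)

/-- The language of a tuple pattern. -/
def lang (t : TP A V) : Set (List (Word A)) :=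
  {w | ∃ θ : V → Word A, w = t.map (substPatW θ)}

/-- `M ⊨ t` : there is a data-substitution `Θ` (with `rows` rows) with `Θt = M`. -/
def Models [DecidableEq V] (M : Data A) (rows : ℕ) (t : TP A V) : Prop :=
  ∃ Θ : DSub A V, Θ.m = rows ∧ Θ.WF ∧ Θ.apply t = M

/-- `M ⊨ₛ t` : additionally, no variable of `t` is mapped to ε in every row. -/
def SModels [DecidableEq V] (M : Data A) (rows : ℕ) (t : TP A V) : Prop :=
  ∃ Θ : DSub A V, Θ.m = rows ∧ Θ.WF ∧ Θ.apply t = M ∧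
    ∀ x ∈ fvTP t, ¬ allEps (lookupCol Θ.entries x)

/-- Renaming the variables of a tuple pattern. -/
def renameTP (ρ : V → V) (t : TP A V) : TP A V :=
  t.map (List.map (Sum.map id ρ))

/-- The measure `#t` of a tuple pattern. -/
def tpMeasure (t : TP A V) : ℕ := (t.map List.length).sum + t.length

/-- `size(M)`. -/
def dataSize (M : Data A) : ℕ :=
  (M.map (fun c => (c.map (fun w => w.length + 1)).sum)).sum

/-- Learning data (as columns) whose rows enumerate the given list of tuples. -/
def colsOfRows (n : ℕ) (rows : List (List (Word A))) : Data A :=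
  (List.range n).map (fun j => rows.map (fun r => r.getD j []))

/-- `m ⊨ₛ t` for a (possibly infinite) set of tuples of words. -/
def SetSModels (S : Set (List (Word A))) (t : TP A V) : Prop :=
  ∃ θ : S → V → Word A,
    (∀ v : S, (v : List (Word A)) = t.map (substPatW (θ v))) ∧
    ∀ x ∈ fvTP t, ∃ v : S, θ v x ≠ []

/-- A rule instance of the ⇒ relation. -/
inductive RuleInst (A V : Type) where
  | pre (i j : ℕ)
  | cpre (j : ℕ) (a : A)
  | eps (j : ℕ)

/-- The reduction step derived by a given rule instance. -/
def RuleStep : RuleInst A V → TP A V → TP A V → Prop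
  | .pre i j, t, t' => ∃ (hi : i < t.length) (hj : j < t.length),
      i ≠ j ∧ t[i]'hi ≠ [] ∧ ∃ p', t[j]'hj = (t[i]'hi) ++ p' ∧ t' = t.set j p'
  | .cpre j a, t, t' => ∃ (_ : j < t.length) (p' : Pat A V),
      t.getD j [] = Sum.inl a :: p' ∧ t' = t.set j p'
  | .eps j, t, t' => ∃ (_ : j < t.length), t.getD j [] = ([] : Pat A V) ∧ t' = t.eraseIdx j

/-- Well-definedness of the residual of a tuple pattern along a rule instance. -/
def ResDefined : RuleInst A V → TP A V → Prop
  | .pre i j, t => i < t.length ∧ j < t.length ∧ (t.getD i []) <+: (t.getD j [])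
  | .cpre j a, t => j < t.length ∧ ∃ p', t.getD j [] = Sum.inl a :: p'
  | .eps j, t => j < t.length ∧ t.getD j [] = ([] : Pat A V)

/-- The residual of a tuple pattern along a rule instance. -/
def residual : RuleInst A V → TP A V → TP A V
  | .pre i j, t => t.set j ((t.getD j []).drop (t.getD i []).length)
  | .cpre j _, t => t.set j ((t.getD j []).drop 1)
  | .eps j, t => t.eraseIdx j

/-- The reduction relation ⇒ extended with the postfix rules. -/
inductive PStepX : TP A V → TP A V → Prop
  | pre (t : TP A V) (i j : ℕ) (hi : i < t.length) (hj : j < t.length)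
      (hij : i ≠ j) (p' : Pat A V)
      (hdec : t[j]'hj = (t[i]'hi) ++ p') (hne : t[i]'hi ≠ []) :
      PStepX t (t.set j p')
  | cpre (t : TP A V) (j : ℕ) (hj : j < t.length) (a : A) (p' : Pat A V)
      (hdec : t[j]'hj = Sum.inl a :: p') :
      PStepX t (t.set j p')
  | eps (t : TP A V) (j : ℕ) (hj : j < t.length) (heps : t[j]'hj = []) :
      PStepX t (t.eraseIdx j)
  | post (t : TP A V) (i j : ℕ) (hi : i < t.length) (hj : j < t.length)
      (hij : i ≠ j) (p' : Pat A V)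
      (hdec : t[j]'hj = p' ++ (t[i]'hi)) (hne : t[i]'hi ≠ []) :
      PStepX t (t.set j p')
  | cpost (t : TP A V) (j : ℕ) (hj : j < t.length) (a : A) (p' : Pat A V)
      (hdec : t[j]'hj = p' ++ [Sum.inl a]) :
      PStepX t (t.set j p')

/-- Pattern-valued substitution. -/
def substPat (σ : V → Pat A V) (p : Pat A V) : Pat A V :=
  (p.map (Sum.elim (fun a => [Sum.inl a]) σ)).flatten

/-- Left-unitary closure of the letters and the components of `t`. -/
inductive Cl (t : TP A V) : Pat A V → Prop
  | nil : Cl t []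
  | letter (a : A) : Cl t [Sum.inl a]
  | comp (p : Pat A V) (hp : p ∈ t) : Cl t p
  | app (u v : Pat A V) (hu : Cl t u) (hv : Cl t v) : Cl t (u ++ v)
  | cancel (u v : Pat A V) (hu : Cl t u) (huv : Cl t (u ++ v)) : Cl t v

/-- Submonoid generated by a set of patterns. -/
inductive Star (P : Set (Pat A V)) : Pat A V → Prop
  | nil : Star P []
  | cons (p w : Pat A V) (hp : p ∈ P) (hw : Star P w) : Star P (p ++ w)

@[simp] theorem substPatW_nil (θ : V → Word A) : substPatW θ [] = [] := rfl

@[simp] theorem substPatW_append (θ : V → Word A) (p q : Pat A V) :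
    substPatW θ (p ++ q) = substPatW θ p ++ substPatW θ q := by
  simp [substPatW]

@[simp] theorem substPatW_inl (θ : V → Word A) (a : A) (q : Pat A V) :
    substPatW θ (Sum.inl a :: q) = a :: substPatW θ q := by
  simp [substPatW]

@[simp] theorem substPatW_inr (θ : V → Word A) (a : V) (q : Pat A V) :
    substPatW θ (Sum.inr a :: q) = θ a ++ substPatW θ q := by
  simp [substPatW]

@[simp] theorem substPat_nil (θ : V → Pat A V) : substPat θ [] = [] := rfl

@[simp] theorem substPat_append (θ : V → Pat A V) (p q : Pat A V) :
    substPat θ (p ++ q) = substPat θ p ++ substPat θ q := by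
  simp [substPat]

@[simp] theorem substPat_inl (θ : V → Pat A V) (a : A) (q : Pat A V) :
    substPat θ (Sum.inl a :: q) = Sum.inl a :: substPat θ q := by
  simp [substPat]

@[simp] theorem substPat_inr (θ : V → Pat A V) (a : V) (q : Pat A V) :
    substPat θ (Sum.inr a :: q) = θ a ++ substPat θ q := by
  simp [substPat]

theorem substPatW_substPat (θ : V → Word A) (σ : V → Pat A V) (p : Pat A V) :
    substPatW θ (substPat σ p) = substPatW (fun v => substPatW θ (σ v)) p := by
  induction p with
  | nil => rfl
  | cons s p ih => cases s <;> simp [ih]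

theorem substPatW_congr (θ θ' : V → Word A) (p : Pat A V)
    (h : ∀ v, Sum.inr v ∈ p → θ v = θ' v) : substPatW θ p = substPatW θ' p := by
  induction p with
  | nil => rfl
  | cons s p ih =>
    have ih' := ih (fun v hv => h v (List.mem_cons_of_mem _ hv))
    cases s with
    | inl a => simp [ih']
    | inr a => simp [ih', h a (by simp)]

theorem substVar_eq [DecidableEq A] [DecidableEq V] (x : V) (q p : Pat A V) :
    substVar x q p = substPat (fun v => if v = x then q else [Sum.inr v]) p := by
  unfold substVar substPat
  congr 1
  apply List.map_congr_left
  intro s _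
  cases s <;> simp

theorem mem_substPat (σ : V → Pat A V) (p : Pat A V) (v : V) (h : Sum.inr v ∈ substPat σ p) :
    ∃ w, Sum.inr w ∈ p ∧ Sum.inr v ∈ σ w := by
  induction p with
  | nil => simp at h
  | cons s p ih =>
    cases s with
    | inl a =>
      simp only [substPat_inl, List.mem_cons, reduceCtorEq, false_or] at h
      obtain ⟨w, h1, h2⟩ := ih h
      exact ⟨w, List.mem_cons_of_mem _ h1, h2⟩
    | inr a =>
      simp only [substPat_inr, List.mem_append] at h
      rcases h with h | h
      · exact ⟨a, by simp, h⟩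
      · obtain ⟨w, h1, h2⟩ := ih h
        exact ⟨w, List.mem_cons_of_mem _ h1, h2⟩

theorem Cl.mono {t t' : TP A V} (h : ∀ p ∈ t, Cl t' p) {w : Pat A V} (hw : Cl t w) : Cl t' w := by
  induction hw with
  | nil => exact .nil
  | letter a => exact .letter a
  | comp p hp => exact h p hp
  | app u v _ _ h1 h2 => exact .app u v h1 h2
  | cancel u v _ _ h1 h2 => exact .cancel u v h1 h2

theorem Cl.subst {t : TP A V} (σ : V → Pat A V) {w : Pat A V} (hw : Cl t w) :
    Cl (t.map (substPat σ)) (substPat σ w) := by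
  induction hw with
  | nil => exact .nil
  | letter a => exact .letter a
  | comp p hp => exact .comp _ (List.mem_map_of_mem hp)
  | app u v _ _ h1 h2 => rw [substPat_append]; exact .app _ _ h1 h2
  | cancel u v _ _ h1 h2 => rw [substPat_append] at h2; exact .cancel _ _ h1 h2

theorem Cl.agree {t : TP A V} (f g : Pat A V → Word A)
    (hf : ∀ u v, f (u ++ v) = f u ++ f v) (hg : ∀ u v, g (u ++ v) = g u ++ g v)
    (h0 : f [] = g []) (hl : ∀ a, f [Sum.inl a] = g [Sum.inl a]) (ht : ∀ p ∈ t, f p = g p)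
    {w : Pat A V} (hw : Cl t w) : f w = g w := by
  induction hw with
  | nil => exact h0
  | letter a => exact hl a
  | comp p hp => exact ht p hp
  | app u v _ _ h1 h2 => rw [hf, hg, h1, h2]
  | cancel u v _ _ h1 h2 => rw [hf, hg, h1] at h2; exact List.append_cancel_left h2

theorem PStep.cl_iff {t t' : TP A V} (h : PStep t t') (w : Pat A V) : Cl t w ↔ Cl t' w := by
  cases h with
  | pre i j hi hj hij p' hdec hne =>
    constructor
    · refine Cl.mono ?_
      intro p hp
      obtain ⟨k, hk, rfl⟩ := List.getElem_of_mem hp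
      by_cases hkj : k = j
      · subst hkj
        rw [hdec]
        refine .app _ _ (.comp _ ?_) (.comp _ ?_)
        · exact List.mem_iff_getElem.2 ⟨i, by simpa using hi, by simp [List.getElem_set, hij.symm]⟩
        · exact List.mem_iff_getElem.2 ⟨k, by simpa using hk, by simp⟩
      · exact .comp _ (List.mem_iff_getElem.2
          ⟨k, by simpa using hk, by simp [List.getElem_set, Ne.symm hkj]⟩)
    · refine Cl.mono ?_
      intro p hp
      rcases List.mem_or_eq_of_mem_set hp with h | rfl
      · exact .comp _ h
      · exact .cancel t[i] _ (.comp _ (List.getElem_mem hi))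
          (by rw [← hdec]; exact .comp _ (List.getElem_mem hj))
  | cpre j hj a p' hdec =>
    constructor
    · refine Cl.mono ?_
      intro p hp
      obtain ⟨k, hk, rfl⟩ := List.getElem_of_mem hp
      by_cases hkj : k = j
      · subst hkj
        rw [hdec]
        refine .app [Sum.inl a] _ (.letter _) (.comp _ ?_)
        exact List.mem_iff_getElem.2 ⟨k, by simpa using hk, by simp⟩
      · exact .comp _ (List.mem_iff_getElem.2
          ⟨k, by simpa using hk, by simp [List.getElem_set, Ne.symm hkj]⟩)
    · refine Cl.mono ?_
      intro p hp
      rcases List.mem_or_eq_of_mem_set hp with h | rfl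
      · exact .comp _ h
      · refine .cancel [Sum.inl a] _ (.letter _) ?_
        have := Cl.comp (t := t) _ (List.getElem_mem hj)
        rw [hdec] at this
        exact this
  | eps j hj heps =>
    constructor
    · refine Cl.mono ?_
      intro p hp
      obtain ⟨k, hk, rfl⟩ := List.getElem_of_mem hp
      by_cases hkj : k = j
      · subst hkj
        rw [heps]; exact .nil
      · exact .comp _ (List.mem_eraseIdx_iff_getElem.2 ⟨k, hk, hkj, rfl⟩)
    · refine Cl.mono ?_
      intro p hp
      exact .comp _ (List.mem_of_mem_eraseIdx hp)

theorem cl_iff_of_reduces {t t' : TP A V} (h : Relation.ReflTransGen PStep t t') (w : Pat A V) :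
    Cl t w ↔ Cl t' w := by
  induction h with
  | refl => rfl
  | tail _ h ih => exact ih.trans (h.cl_iff w)

theorem Star.app {P : Set (Pat A V)} {u v : Pat A V} (hu : Star P u) (hv : Star P v) :
    Star P (u ++ v) := by
  induction hu with
  | nil => exact hv
  | cons p w hp _ ih => rw [List.append_assoc]; exact .cons _ _ hp ih

theorem Star.single {P : Set (Pat A V)} {u : Pat A V} (hu : u ∈ P) : Star P u := by
  simpa using Star.cons u [] hu .nil

theorem Star.cancel {P : Set (Pat A V)} (h0 : [] ∉ P) (hP : ∀ p ∈ P, ∀ q ∈ P, p <+: q → p = q)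
    {u v : Pat A V} (hu : Star P u) (huv : Star P (u ++ v)) : Star P v := by
  induction hu with
  | nil => exact huv
  | cons p w hp _ ih =>
    apply ih
    generalize hx : p ++ w ++ v = x at huv
    cases huv with
    | nil =>
      exfalso
      simp only [List.append_eq_nil_iff] at hx
      exact h0 (hx.1.1 ▸ hp)
    | cons q c hq hc =>
      rw [List.append_assoc] at hx
      have : p = q := by
        rcases List.prefix_or_prefix_of_prefix (l₃ := q ++ c) ⟨_, hx⟩ ⟨c, rfl⟩ with h | h
        · exact hP _ hp _ hq h
        · exact (hP _ hq _ hp h).symm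
      subst this
      rw [List.append_cancel_left hx]
      exact hc

theorem Cl.star {P : Set (Pat A V)} (h0 : [] ∉ P) (hP : ∀ p ∈ P, ∀ q ∈ P, p <+: q → p = q)
    (hl : ∀ a, [Sum.inl a] ∈ P) {t : TP A V} (ht : ∀ p ∈ t, Star P p)
    {w : Pat A V} (hw : Cl t w) : Star P w := by
  induction hw with
  | nil => exact .nil
  | letter a => exact .single (hl a)
  | comp p hp => exact ht p hp
  | app u v _ _ h1 h2 => exact h1.app h2
  | cancel u v _ _ h1 h2 => exact h1.cancel h0 hP h2

theorem Star.sing_mem {P : Set (Pat A V)} (h0 : [] ∉ P) {s : A ⊕ V} (h : Star P [s]) :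
    [s] ∈ P := by
  generalize hx : [s] = x at h
  cases h with
  | nil => simp at hx
  | cons p w hp hw =>
    cases p with
    | nil => exact absurd hp h0
    | cons b p =>
      simp only [List.cons_append, List.cons.injEq] at hx
      obtain ⟨rfl, h2⟩ := hx
      have := List.append_eq_nil_iff.1 h2.symm
      obtain ⟨rfl, rfl⟩ := this
      simpa using hp

theorem Cl.vars {t : TP A V} {S : Set V} (ht : ∀ p ∈ t, ∀ v, Sum.inr v ∈ p → v ∈ S)
    {w : Pat A V} (hw : Cl t w) : ∀ v, Sum.inr v ∈ w → v ∈ S := by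
  induction hw with
  | nil => simp
  | letter a => simp
  | comp p hp => exact ht p hp
  | app u v _ _ h1 h2 =>
    intro x hx
    rcases List.mem_append.1 hx with h | h
    · exact h1 x h
    · exact h2 x h
  | cancel u v _ _ h1 h2 => exact fun x hx => h2 x (List.mem_append_right _ hx)

/-- Prefix lemma: patterns whose instances are always prefixes are prefixes. -/
theorem prefix_of_all [Nontrivial A] (p q : Pat A V)
    (h : ∀ θ : V → Word A, substPatW θ p <+: substPatW θ q) : p <+: q := by
  classical
  induction p generalizing q with
  | nil => exact List.nil_prefix
  | cons s p ih =>
    obtain ⟨a₀, b₀, hab⟩ := exists_pair_ne A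
    cases q with
    | nil =>
      exfalso
      have := h (fun _ => [a₀])
      cases s <;> simp at this
    | cons r q =>
      have key : s = r := by
        rcases s with a | x <;> rcases r with b | y
        · have := h (fun _ => [a₀])
          simp only [substPatW_inl, List.cons_prefix_cons] at this
          rw [this.1]
        · exfalso
          obtain ⟨b, hb⟩ := exists_ne a
          have := h (fun _ => [b])
          simp only [substPatW_inl, substPatW_inr, List.cons_append, List.cons_prefix_cons] at this
          exact hb this.1.symm
        · exfalso
          obtain ⟨c, hc⟩ := exists_ne b
          have := h (fun _ => [c])
          simp only [substPatW_inl, substPatW_inr, List.cons_append, List.cons_prefix_cons] at this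
          exact hc this.1
        · by_contra hne
          have hxy : y ≠ x := fun e => hne (by rw [e])
          have := h (fun v => if v = x then [a₀] else [b₀])
          simp only [substPatW_inr, if_true, if_neg hxy, List.cons_append,
            List.cons_prefix_cons] at this
          exact hab this.1
      subst key
      rw [List.cons_prefix_cons]
      refine ⟨rfl, ih q ?_⟩
      intro θ
      have := h θ
      cases s <;> simpa [List.prefix_append_right_inj] using this

theorem eq_of_all [Nontrivial A] (p q : Pat A V)
    (h : ∀ θ : V → Word A, substPatW θ p = substPatW θ q) : p = q := by
  have h1 := prefix_of_all p q (fun θ => by rw [h θ])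
  have h2 := prefix_of_all q p (fun θ => by rw [h θ])
  exact h1.eq_of_length (le_antisymm h1.length_le h2.length_le)

/-- Uniform left division at the level of patterns. -/
theorem Cl.lift [Nontrivial A] {t₁ : TP A V} (η : (V → Word A) → V → Word A)
    (ht : ∀ p ∈ t₁, ∃ q : Pat A V, ∀ θ, substPatW θ q = substPatW (η θ) p)
    {w : Pat A V} (hw : Cl t₁ w) :
    ∃ q : Pat A V, ∀ θ, substPatW θ q = substPatW (η θ) w := by
  induction hw with
  | nil => exact ⟨[], fun _ => rfl⟩
  | letter a => exact ⟨[Sum.inl a], fun _ => rfl⟩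
  | comp p hp => exact ht p hp
  | app u v _ _ h1 h2 =>
    obtain ⟨q1, h1⟩ := h1
    obtain ⟨q2, h2⟩ := h2
    exact ⟨q1 ++ q2, fun θ => by simp [h1, h2]⟩
  | cancel u v _ _ h1 h2 =>
    obtain ⟨q1, h1⟩ := h1
    obtain ⟨q2, h2⟩ := h2
    obtain ⟨r, rfl⟩ := prefix_of_all q1 q2 (fun θ => by rw [h1, h2]; simp)
    refine ⟨r, fun θ => ?_⟩
    have := h2 θ
    rw [substPatW_append, substPatW_append, h1] at this
    exact List.append_cancel_left this

/-- The invariant of the inference procedure. -/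
structure Inv (M : Data A) (m : ℕ) (t : TP A V) (E : List (V × Col A)) : Prop where
  nodup : (E.map Prod.fst).Nodup
  len : ∀ e ∈ E, e.2.length = m
  vars : ∀ p ∈ t, ∀ v, Sum.inr v ∈ p → v ∈ E.map Prod.fst
  cl : ∀ v ∈ E.map Prod.fst, Cl t [Sum.inr v]
  rows : ∀ k < m, ∀ ρ : V → Word A, (∀ e ∈ E, ρ e.1 = e.2.getD k []) →
    t.map (substPatW ρ) = M.map (fun c => c.getD k [])

theorem Inv.step_aux [DecidableEq A] [DecidableEq V] {M : Data A} {m : ℕ} {t : TP A V}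
    {E : List (V × Col A)} (h : Inv M m t E) (x : V) (c : Col A) (q : Pat A V)
    (E' : List (V × Col A))
    (hnd : (E'.map Prod.fst).Nodup) (hlen : ∀ e ∈ E', e.2.length = m)
    (hE : ∀ e ∈ E, (e.1 = x ∧ e.2 = c) ∨ (e.1 ≠ x ∧ e ∈ E'))
    (hq : ∀ v, Sum.inr v ∈ q → v ∈ E'.map Prod.fst)
    (hcl : ∀ v ∈ E'.map Prod.fst, (v ≠ x ∧ v ∈ E.map Prod.fst) ∨
      ((∀ w ∈ E.map Prod.fst, w ≠ x → Cl (substVarTP x q t) [Sum.inr w]) →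
        Cl (substVarTP x q t) q → Cl (substVarTP x q t) [Sum.inr v]))
    (hx : x ∈ E.map Prod.fst)
    (hr : ∀ k < m, ∀ ρ : V → Word A, (∀ e ∈ E', ρ e.1 = e.2.getD k []) →
      substPatW ρ q = c.getD k []) :
    Inv M m (substVarTP x q t) E' := by
  have hsub : substVarTP x q t =
      t.map (substPat (fun v => if v = x then q else [Sum.inr v])) := by
    unfold substVarTP
    exact List.map_congr_left (fun p _ => substVar_eq x q p)
  have hcl1 : ∀ w ∈ E.map Prod.fst, w ≠ x → Cl (substVarTP x q t) [Sum.inr w] := by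
    intro w hw hne
    have := (h.cl w hw).subst (fun v => if v = x then q else [Sum.inr v])
    rw [← hsub] at this
    simpa [hne] using this
  have hcl2 : Cl (substVarTP x q t) q := by
    have := (h.cl x hx).subst (fun v => if v = x then q else [Sum.inr v])
    rw [← hsub] at this
    simpa using this
  refine ⟨hnd, hlen, ?_, ?_, ?_⟩
  · intro p hp v hv
    rw [hsub] at hp
    obtain ⟨p', hp', rfl⟩ := List.mem_map.1 hp
    obtain ⟨w, hw, hvw⟩ := mem_substPat _ _ _ hv
    split_ifs at hvw with hwx
    · exact hq v hvw
    · simp only [List.mem_singleton, Sum.inr.injEq] at hvw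
      subst hvw
      obtain ⟨e, he, rfl⟩ := List.mem_map.1 (h.vars _ hp' _ hw)
      rcases hE e he with h1 | h1
      · exact absurd h1.1 hwx
      · exact List.mem_map_of_mem h1.2
  · intro v hv
    rcases hcl v hv with h1 | h1
    · exact hcl1 v h1.2 h1.1
    · exact h1 hcl1 hcl2
  · intro k hk ρ hρ
    rw [← h.rows k hk (fun v => if v = x then c.getD k [] else ρ v), hsub, List.map_map]
    · apply List.map_congr_left
      intro p _
      simp only [Function.comp_apply]
      rw [substPatW_substPat]
      congr 1
      funext v
      split_ifs with hv
      · exact hr k hk ρ hρ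
      · simp
    · intro e he
      rcases hE e he with h1 | h1
      · simp [h1.1, h1.2]
      · simp [h1.1, hρ e h1.2]

theorem set_mem {E : List (V × Col A)} (hnd : (E.map Prod.fst).Nodup) (j : ℕ) (hj : j < E.length)
    (b : V × Col A) {e : V × Col A} (he : e ∈ E) :
    (e.1 = E[j].1 ∧ e.2 = E[j].2) ∨ (e.1 ≠ E[j].1 ∧ e ∈ E.set j b) := by
  obtain ⟨k, hk, rfl⟩ := List.getElem_of_mem he
  by_cases hkj : k = j
  · subst hkj; simp
  · right
    constructor
    · intro h
      apply hkj
      have := (List.Nodup.getElem_inj_iff hnd (i := k) (j := j) (hi := by simpa using hk)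
        (hj := by simpa using hj)).1 (by simpa using h)
      exact this
    · exact List.mem_iff_getElem.2 ⟨k, by simpa using hk, by simp [List.getElem_set, Ne.symm hkj]⟩

theorem of_set_mem {E : List (V × Col A)} (hnd : (E.map Prod.fst).Nodup) (j : ℕ)
    (hj : j < E.length) (b : V × Col A) {e : V × Col A} (he : e ∈ E.set j b) :
    e = b ∨ (e.1 ≠ E[j].1 ∧ e ∈ E) := by
  obtain ⟨k, hk, rfl⟩ := List.getElem_of_mem he
  by_cases hkj : k = j
  · subst hkj; simp
  · right
    have hk' : k < E.length := by simpa using hk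
    have : (E.set j b)[k] = E[k] := by simp [List.getElem_set, Ne.symm hkj]
    rw [this]
    refine ⟨?_, List.getElem_mem _⟩
    intro h
    apply hkj
    exact (List.Nodup.getElem_inj_iff hnd (i := k) (j := j) (hi := by simpa using hk')
        (hj := by simpa using hj)).1 (by simpa using h)

theorem nodup_set {E : List (V × Col A)} (hnd : (E.map Prod.fst).Nodup) (j : ℕ)
    (b : V × Col A) (hb : b.1 ∉ E.map Prod.fst) : ((E.set j b).map Prod.fst).Nodup := by
  rw [List.map_set]
  exact hnd.set hb

theorem Inv.step [DecidableEq A] [DecidableEq V] {M : Data A} {m : ℕ}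
    {c c' : TP A V × DSub A V} (hs : Step c c') (hm : c.2.m = m) (h : Inv M m c.1 c.2.entries) :
    c'.2.m = m ∧ Inv M m c'.1 c'.2.entries := by
  cases hs with
  | pre t m' E i j hi hj hij s hslen hpre hne x' hx1 hx2 =>
    refine ⟨hm, ?_⟩
    dsimp only at h hm ⊢
    subst hm
    have hne1 : E[i].1 ≠ E[j].1 := by
      intro hh
      exact hij ((List.Nodup.getElem_inj_iff h.nodup (i := i) (j := j) (hi := by simpa using hi)
        (hj := by simpa using hj)).1 (by simpa using hh))
    have hiE : E[i] ∈ E.set j (x', s) :=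
      List.mem_iff_getElem.2 ⟨i, by simpa using hi, by simp [List.getElem_set, hij.symm]⟩
    have hjE : (x', s) ∈ E.set j (x', s) :=
      List.mem_iff_getElem.2 ⟨j, by simpa using hj, by simp⟩
    have hsm : s.length = m' := by rw [hslen]; exact h.len _ (List.getElem_mem hi)
    refine h.step_aux E[j].1 E[j].2 _ _ (nodup_set h.nodup _ _ hx1) ?_
      (fun e he => set_mem h.nodup j hj _ he) ?_ ?_ (List.mem_map_of_mem (List.getElem_mem hj)) ?_
    · intro e he
      rcases of_set_mem h.nodup j hj _ he with rfl | h1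
      · exact hsm
      · exact h.len _ h1.2
    · intro v hv
      simp only [List.mem_cons, Sum.inr.injEq, List.not_mem_nil, or_false] at hv
      rcases hv with rfl | rfl
      · exact List.mem_map_of_mem hiE
      · exact List.mem_map.2 ⟨_, hjE, rfl⟩
    · intro v hv
      obtain ⟨e, he, rfl⟩ := List.mem_map.1 hv
      rcases of_set_mem h.nodup j hj _ he with rfl | h1
      · right
        intro h1 h2
        exact .cancel [Sum.inr E[i].1] _ (h1 _ (List.mem_map_of_mem (List.getElem_mem hi)) hne1) h2
      · exact Or.inl ⟨h1.1, List.mem_map_of_mem h1.2⟩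
    · intro k hk ρ hρ
      have e1 := hρ _ hiE
      have e2 := hρ _ hjE
      have hik : k < E[i].2.length := by rw [h.len _ (List.getElem_mem hi)]; exact hk
      have hsk : k < s.length := by omega
      simp only [substPatW_inr, substPatW_nil, List.append_nil]
      rw [e1, e2, hpre]
      simp [List.getD_eq_getElem?_getD, hik, hsk]
  | cpre t m' E j hj a s hpre x' hx1 hx2 =>
    refine ⟨hm, ?_⟩
    dsimp only at h hm ⊢
    subst hm
    have hjE : (x', s) ∈ E.set j (x', s) :=
      List.mem_iff_getElem.2 ⟨j, by simpa using hj, by simp⟩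
    have hsm : s.length = m' := by
      rw [← h.len _ (List.getElem_mem hj), hpre, List.length_map]
    refine h.step_aux E[j].1 E[j].2 _ _ (nodup_set h.nodup _ _ hx1) ?_
      (fun e he => set_mem h.nodup j hj _ he) ?_ ?_ (List.mem_map_of_mem (List.getElem_mem hj)) ?_
    · intro e he
      rcases of_set_mem h.nodup j hj _ he with rfl | h1
      · exact hsm
      · exact h.len _ h1.2
    · intro v hv
      simp only [List.mem_cons, Sum.inr.injEq, reduceCtorEq, false_or, List.not_mem_nil,
        or_false] at hv
      subst hv
      exact List.mem_map.2 ⟨_, hjE, rfl⟩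
    · intro v hv
      obtain ⟨e, he, rfl⟩ := List.mem_map.1 hv
      rcases of_set_mem h.nodup j hj _ he with rfl | h1
      · right
        intro h1 h2
        exact .cancel [Sum.inl a] _ (.letter a) h2
      · exact Or.inl ⟨h1.1, List.mem_map_of_mem h1.2⟩
    · intro k hk ρ hρ
      have e2 := hρ _ hjE
      have hsk : k < s.length := by omega
      simp only [substPatW_inl, substPatW_inr, substPatW_nil, List.append_nil]
      rw [e2, hpre]
      simp [List.getD_eq_getElem?_getD, hsk]
  | eps t m' E j hj heps =>
    refine ⟨hm, ?_⟩
    dsimp only at h hm ⊢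
    subst hm
    have hsub : ∀ e, e ∈ E.eraseIdx j → e.1 ≠ E[j].1 ∧ e ∈ E := by
      intro e he
      obtain ⟨k, hk, hkj, rfl⟩ := List.mem_eraseIdx_iff_getElem.1 he
      refine ⟨fun hh => hkj ?_, List.getElem_mem _⟩
      exact (List.Nodup.getElem_inj_iff h.nodup (i := k) (j := j) (hi := by simpa using hk)
        (hj := by simpa using hj)).1 (by simpa using hh)
    refine h.step_aux E[j].1 E[j].2 _ _ ?_ ?_ ?_ (by simp) ?_
      (List.mem_map_of_mem (List.getElem_mem hj)) ?_
    · exact h.nodup.sublist ((List.eraseIdx_sublist E j).map _)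
    · exact fun e he => h.len e (hsub e he).2
    · intro e he
      obtain ⟨k, hk, rfl⟩ := List.getElem_of_mem he
      by_cases hkj : k = j
      · subst hkj; simp
      · right
        have : E[k] ∈ E.eraseIdx j := List.mem_eraseIdx_iff_getElem.2 ⟨k, hk, hkj, rfl⟩
        exact ⟨(hsub _ this).1, this⟩
    · intro v hv
      obtain ⟨e, he, rfl⟩ := List.mem_map.1 hv
      exact Or.inl ⟨(hsub e he).1, List.mem_map_of_mem (hsub e he).2⟩
    · intro k hk ρ _
      have hjk : k < E[j].2.length := by rw [h.len _ (List.getElem_mem hj)]; exact hk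
      simp only [substPatW_nil]
      rw [List.getD_eq_getElem _ _ hjk]
      exact (heps _ (List.getElem_mem hjk)).symm

theorem Inv.init (xs : List V) (hxs : xs.Nodup) (M : Data A) (m : ℕ)
    (hMn : M.length = xs.length) (hcols : ∀ c ∈ M, c.length = m) :
    Inv M m (trivTP xs : TP A V) (xs.zip M) := by
  have hfst : (xs.zip M).map Prod.fst = xs := List.map_fst_zip (by omega)
  refine ⟨by rw [hfst]; exact hxs, ?_, ?_, ?_, ?_⟩
  · rintro ⟨x, c⟩ he
    exact hcols _ (List.of_mem_zip he).2
  · intro p hp v hv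
    obtain ⟨x, hx, rfl⟩ := List.mem_map.1 hp
    simp only [List.mem_singleton, Sum.inr.injEq] at hv
    rw [hfst, hv]; exact hx
  · intro v hv
    rw [hfst] at hv
    exact .comp _ (List.mem_map.2 ⟨v, hv, rfl⟩)
  · intro k hk ρ hρ
    apply List.ext_getElem
    · simp [trivTP, hMn]
    · intro i h1 h2
      have hx : i < xs.length := by simpa [trivTP] using h1
      have hM : i < M.length := by simpa using h2
      have := hρ (xs[i], M[i]) (List.mem_iff_getElem.2 ⟨i, by simp; omega, by simp⟩)
      simp only at this
      simp [trivTP, this]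

theorem exists_row (E : List (V × Col A)) (hnd : (E.map Prod.fst).Nodup) (k : ℕ) :
    ∃ ρ : V → Word A, ∀ e ∈ E, ρ e.1 = e.2.getD k [] := by
  classical
  refine ⟨fun v => if h : ∃ e ∈ E, e.1 = v then h.choose.2.getD k [] else [], ?_⟩
  intro e he
  have hex : ∃ e' ∈ E, e'.1 = e.1 := ⟨e, he, rfl⟩
  dsimp only
  rw [dif_pos hex]
  have := hex.choose_spec
  rw [List.inj_on_of_nodup_map hnd this.1 he this.2]

theorem exists_fresh [Infinite V] (t : TP A V) (E : List (V × Col A)) :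
    ∃ x' : V, x' ∉ E.map Prod.fst ∧ Sum.inr x' ∉ t.flatten := by
  classical
  have h1 : {x : V | x ∈ E.map Prod.fst}.Finite := List.finite_toSet _
  have h2 : {x : V | (Sum.inr x : A ⊕ V) ∈ t.flatten}.Finite :=
    Set.Finite.preimage (f := (Sum.inr : V → A ⊕ V)) Sum.inr_injective.injOn
      (List.finite_toSet t.flatten)
  obtain ⟨x, hx⟩ := (h1.union h2).exists_notMem
  exact ⟨x, fun h => hx (Or.inl h), fun h => hx (Or.inr h)⟩

/-- **Minimality of inferred patterns.**
Suppose `((x₁,…,xₙ), [M/x⃗]) ⟶* (t₁, Θ₁)` where `(t₁, Θ₁)` admits no further step.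
If `t₀` is a solvable tuple pattern with `M ⊨ t₀`, then `L(t₁) ⊇ L(t₀)` implies
`L(t₁) = L(t₀)`. -/
theorem minimality
    [DecidableEq A] [DecidableEq V] [Nontrivial A] [Countable V] [Infinite V]
    (xs : List V) (hxs : xs.Nodup) (M : Data A) (m : ℕ)
    (hMn : M.length = xs.length) (hcols : ∀ c ∈ M, c.length = m)
    (t₁ : TP A V) (Θ₁ : DSub A V)
    (h : Relation.ReflTransGen Step (trivTP xs, ⟨m, xs.zip M⟩) (t₁, Θ₁))
    (hstuck : ¬ ∃ c, Step (t₁, Θ₁) c)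
    (t₀ : TP A V) (hsolv : Solvable t₀) (hM : Models M m t₀)
    (hsup : lang t₀ ⊆ lang t₁) :
    lang t₁ = lang t₀ := by
  have hinv : Θ₁.m = m ∧ Inv M m t₁ Θ₁.entries := by
    have : ∀ c : TP A V × DSub A V,
        Relation.ReflTransGen Step (trivTP xs, ⟨m, xs.zip M⟩) c →
        c.2.m = m ∧ Inv M m c.1 c.2.entries := by
      intro c hc
      induction hc with
      | refl => exact ⟨rfl, Inv.init xs hxs M m hMn hcols⟩
      | tail _ hs ih => exact Inv.step hs ih.1 ih.2
    exact this _ h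
  obtain ⟨hm, hI⟩ := hinv
  obtain ⟨m', E⟩ := Θ₁
  dsimp only at hm hI
  subst hm
  -- the uniform factorisation `t₀ = σ t₁`
  have hη : ∀ θ : V → Word A, ∃ η : V → Word A, t₀.map (substPatW θ) = t₁.map (substPatW η) :=
    fun θ => hsup ⟨θ, rfl⟩
  choose η hη using hη
  have hlen01 : t₀.length = t₁.length := by
    have := congrArg List.length (hη (fun _ => []))
    simpa using this
  have hηi : ∀ θ i (h0 : i < t₀.length) (h1 : i < t₁.length),
      substPatW θ t₀[i] = substPatW (η θ) t₁[i] := by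
    intro θ i h0 h1
    have := List.getElem_of_eq (hη θ) (i := i) (by simpa using h0)
    simpa using this
  have hlift : ∀ v : V, ∃ q : Pat A V, v ∈ E.map Prod.fst →
      ∀ θ, substPatW θ q = η θ v := by
    intro v
    by_cases hv : v ∈ E.map Prod.fst
    · obtain ⟨q, hq⟩ := (hI.cl v hv).lift η (by
        intro p hp
        obtain ⟨i, hi, rfl⟩ := List.getElem_of_mem hp
        exact ⟨t₀[i]'(by omega), fun θ => hηi θ i _ hi⟩)
      exact ⟨q, fun _ θ => by simpa using hq θ⟩
    · exact ⟨[], fun h => absurd h hv⟩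
  choose σ hσ using hlift
  have ht : t₀ = t₁.map (substPat σ) := by
    apply List.ext_getElem (by simpa using hlen01)
    intro i h0 h1
    have h1' : i < t₁.length := by simpa using h1
    rw [List.getElem_map]
    apply eq_of_all
    intro θ
    rw [hηi θ i h0 h1', substPatW_substPat]
    apply substPatW_congr
    intro v hv
    exact (hσ v (hI.vars _ (List.getElem_mem h1') v hv) θ).symm
  -- the data on the entries of `Θ₁`
  obtain ⟨Θ₀, hΘm, -, hΘ⟩ := hM
  have hdata : ∀ e ∈ E, ∀ k < m', substPatW (Θ₀.rowSub k) (σ e.1) = e.2.getD k [] := by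
    intro e he k hk
    obtain ⟨ρ, hρ⟩ := exists_row E hI.nodup k
    have h1 := hI.rows k hk ρ hρ
    have h2 : t₀.map (substPatW (Θ₀.rowSub k)) = M.map (fun c => c.getD k []) := by
      rw [← hΘ]
      simp only [DSub.apply, List.map_map]
      apply List.map_congr_left
      intro p _
      simp [List.getD_eq_getElem?_getD, hΘm, hk]
    rw [ht, List.map_map, ← h1] at h2
    have h3 := (hI.cl e.1 (List.mem_map_of_mem he)).agree
      (fun p => substPatW (Θ₀.rowSub k) (substPat σ p)) (substPatW ρ)
      (by simp) (by simp) rfl (by simp)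
      (by
        intro p hp
        exact List.map_inj_left.1 h2 p hp)
    simp only [substPat_inr, substPat_nil, List.append_nil, substPatW_inr, substPatW_nil] at h3
    rw [h3, hρ e he]
  have hcol : ∀ e ∈ E, e.2 = (List.range m').map (fun k => substPatW (Θ₀.rowSub k) (σ e.1)) := by
    intro e he
    apply List.ext_getElem
    · simp [hI.len e he]
    · intro k h1 h2
      have hk : k < m' := by simpa using h2
      have := hdata e he k hk
      simp [this, h1]
  have hnoeps : ∀ e ∈ E, ¬ allEps e.2 := by
    intro e he hall
    obtain ⟨i, hi, rfl⟩ := List.getElem_of_mem he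
    exact hstuck ⟨_, Step.eps t₁ m' E i hi hall⟩
  obtain ⟨x', hx1, hx2⟩ := exists_fresh t₁ E
  have hne : ∀ e ∈ E, σ e.1 ≠ [] := by
    intro e he h0
    apply hnoeps e he
    rw [hcol e he, h0]
    intro w hw
    simp at hw
    exact hw.2
  have hnl : ∀ e ∈ E, ∀ a p, σ e.1 ≠ Sum.inl a :: p := by
    intro e he a p hp
    have hc := hcol e he
    obtain ⟨i, hi, rfl⟩ := List.getElem_of_mem he
    refine hstuck ⟨_, Step.cpre t₁ m' E i hi a
      ((List.range m').map (fun k => substPatW (Θ₀.rowSub k) p)) ?_ x' hx1 hx2⟩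
    rw [hc, hp]
    simp
  have hnp : ∀ e ∈ E, ∀ f ∈ E, σ e.1 <+: σ f.1 → e.1 = f.1 := by
    intro e he f hf hpre
    obtain ⟨p, hp⟩ := hpre
    have hce := hcol e he
    have hcf := hcol f hf
    have hle := hI.len e he
    have hno := hnoeps e he
    obtain ⟨i, hi, rfl⟩ := List.getElem_of_mem he
    obtain ⟨j, hj, rfl⟩ := List.getElem_of_mem hf
    by_contra hcon
    have hij : i ≠ j := by rintro rfl; exact hcon rfl
    refine hstuck ⟨_, Step.pre t₁ m' E i j hi hj hij
      ((List.range m').map (fun k => substPatW (Θ₀.rowSub k) p)) ?_ ?_ hno x' hx1 hx2⟩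
    · simp [hle]
    · rw [hcf, hce, ← hp]
      simp [List.zipWith_map]
  -- the prefix code
  let P : Set (Pat A V) := {p | (∃ a, p = [Sum.inl a]) ∨ ∃ e ∈ E, p = σ e.1}
  have hP0 : [] ∉ P := by
    rintro (⟨a, ha⟩ | ⟨e, he, h0⟩)
    · simp at ha
    · exact hne e he h0.symm
  have hPp : ∀ p ∈ P, ∀ q ∈ P, p <+: q → p = q := by
    rintro p (⟨a, rfl⟩ | ⟨e, he, rfl⟩) q (⟨b, rfl⟩ | ⟨f, hf, rfl⟩) hpq
    · simpa using hpq
    · obtain ⟨r, hr⟩ := hpq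
      exact absurd hr.symm (hnl f hf a r)
    · obtain ⟨r, hr⟩ := hpq
      cases hs : σ e.1 with
      | nil => exact absurd hs (hne e he)
      | cons s w =>
        rw [hs] at hr
        simp only [List.cons_append, List.cons.injEq] at hr
        exact absurd (hr.1 ▸ hs) (hnl e he b w)
    · rw [hnp e he f hf hpq]
  obtain ⟨ys, -, hred⟩ := hsolv
  have hstar0 : ∀ p ∈ t₀, Star P p := by
    intro p hp
    rw [ht] at hp
    obtain ⟨r, hr, rfl⟩ := List.mem_map.1 hp
    have hv := hI.vars r hr
    clear hp hr
    induction r with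
    | nil => exact .nil
    | cons s r ih =>
      have ih' := ih (fun v hv' => hv v (List.mem_cons_of_mem _ hv'))
      cases s with
      | inl a => rw [substPat_inl]; exact .cons [Sum.inl a] _ (Or.inl ⟨a, rfl⟩) ih'
      | inr v =>
        rw [substPat_inr]
        obtain ⟨e, he, hev⟩ := List.mem_map.1 (hv v (by simp))
        exact .cons _ _ (Or.inr ⟨e, he, by rw [hev]⟩) ih'
  have hz : ∀ z ∈ ys, ∃ e ∈ E, σ e.1 = [Sum.inr z] := by
    intro z hz
    have h1 : Cl t₀ [Sum.inr z] :=
      (cl_iff_of_reduces hred _).2 (.comp _ (List.mem_map.2 ⟨z, hz, rfl⟩))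
    have h2 := (h1.star hP0 hPp (fun a => Or.inl ⟨a, rfl⟩) hstar0).sing_mem hP0
    rcases h2 with ⟨a, ha⟩ | ⟨e, he, hh⟩
    · simp at ha
    · exact ⟨e, he, hh.symm⟩
  have hsing : ∀ e ∈ E, ∃ z, σ e.1 = [Sum.inr z] := by
    intro e he
    have h1 := (hI.cl e.1 (List.mem_map_of_mem he)).subst σ
    rw [← ht] at h1
    simp only [substPat_inr, substPat_nil, List.append_nil] at h1
    have h2 := ((cl_iff_of_reduces hred _).1 h1).vars (S := {v | v ∈ ys}) (by
      intro p hp v hv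
      obtain ⟨x, hx, rfl⟩ := List.mem_map.1 hp
      simp only [List.mem_singleton, Sum.inr.injEq] at hv
      rw [hv]; exact hx)
    cases hs : σ e.1 with
    | nil => exact absurd hs (hne e he)
    | cons s w =>
      cases s with
      | inl a => exact absurd hs (hnl e he a w)
      | inr z =>
        obtain ⟨f, hf, hfz⟩ := hz z (h2 z (by rw [hs]; simp))
        have := hnp f hf e he (by rw [hfz, hs]; exact ⟨w, rfl⟩)
        rw [← hs, ← this, hfz]
        exact ⟨z, rfl⟩
  refine Set.Subset.antisymm ?_ hsup
  rintro w ⟨ξ, rfl⟩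
  classical
  refine ⟨fun z => if hh : ∃ e ∈ E, σ e.1 = [Sum.inr z] then ξ hh.choose.1 else [], ?_⟩
  rw [ht, List.map_map]
  apply List.map_congr_left
  intro p hp
  simp only [Function.comp_apply]
  rw [substPatW_substPat]
  apply substPatW_congr
  intro v hv
  obtain ⟨e, he, rfl⟩ := List.mem_map.1 (hI.vars p hp v hv)
  obtain ⟨z, hz'⟩ := hsing e he
  have hex : ∃ f ∈ E, σ f.1 = [Sum.inr z] := ⟨e, he, hz'⟩
  have hspec := hex.choose_spec
  have : hex.choose.1 = e.1 := hnp _ hspec.1 e he (by rw [hspec.2, hz'])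
  rw [hz']
  simp only [substPatW_inr, substPatW_nil, List.append_nil]
  rw [dif_pos hex, this]

end STPaper
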